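/- For every real α > −1 there exist a constant C > 0 and n₀ such that for all integers n ≥ n₀: ∫_0^{1/e} y^α · e^{−4n·y·log(1/y)} dy ≤ C · (n·log n)^{−α−1}. -/

import Mathlib

open MeasureTheory intervalIntegral Real

/-!
Bound `∫ y in 0..b, y ^ α * exp (-c * t * y * log (1 / y))` by splitting at `y = 1 / √t`. Below it,
`log (1 / y) ≥ log t / 2`, so the integrand is dominated by that of a Gamma integral of rate
`(c / 2) * (t * log t)`, which produces the power of `t * log t`. Above it, `t * y ≥ √t` and
`log (1 / y) ≥ log (1 / b) > 0`, so the exponential is at most `exp (-c * log (1 / b) * √t)`, which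
is smaller than any power of `t`. The paper's case is `t = n`, `c = 4`, `b = 1 / e`.
-/

lemma half_log_le_log_one_div {t y : ℝ} (ht : 0 < t) (hy : 0 < y) (h : y * √t ≤ 1) :
    log t / 2 ≤ log (1 / y) := by
  rw [← log_sqrt ht.le]
  exact log_le_log (sqrt_pos.2 ht) ((le_div_iff₀' hy).2 h)

lemma min_le_mul_log_one_div {b t y : ℝ} (hb : b ≤ 1) (ht : 0 < t) (hy : 0 < y) (hyb : y ≤ b) :
    min (t * log t / 2 * y) (log (1 / b) * √t) ≤ t * y * log (1 / y) := by
  rcases le_total (y * √t) 1 with hsmall | hlarge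
  · calc
      min (t * log t / 2 * y) (log (1 / b) * √t) ≤ t * log t / 2 * y := min_le_left _ _
      _ = t * y * (log t / 2) := by ring
      _ ≤ t * y * log (1 / y) := by
        gcongr
        exact half_log_le_log_one_div ht hy hsmall
  · have hb₀ : 0 < b := hy.trans_le hyb
    have hlog : 0 ≤ log (1 / b) := log_nonneg (one_le_one_div hb₀ hb)
    have hsqrt : √t ≤ t * y := calc
      √t ≤ √t * (y * √t) := le_mul_of_one_le_right (sqrt_nonneg t) hlarge
      _ = √t * √t * y := by ring
      _ = t * y := by rw [mul_self_sqrt ht.le]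
    calc
      min (t * log t / 2 * y) (log (1 / b) * √t) ≤ log (1 / b) * √t := min_le_right _ _
      _ = √t * log (1 / b) := mul_comm _ _
      _ ≤ t * y * log (1 / y) := by gcongr

lemma exp_neg_mul_min_le_add (c u v : ℝ) :
    exp (-c * min u v) ≤ exp (-c * u) + exp (-c * v) := by
  rcases min_choice u v with h | h <;> rw [h]
  · exact le_add_of_nonneg_right (exp_nonneg _)
  · exact le_add_of_nonneg_left (exp_nonneg _)

lemma exp_neg_mul_log_one_div_le {b c t y : ℝ} (hb : b ≤ 1) (hc : 0 ≤ c) (ht : 0 < t)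
    (hy : 0 < y) (hyb : y ≤ b) :
    exp (-c * t * y * log (1 / y)) ≤
      exp (-(c / 2 * (t * log t)) * y) + exp (-(c * log (1 / b)) * √t) := by
  calc
    exp (-c * t * y * log (1 / y)) = exp (-(c * (t * y * log (1 / y)))) := by ring_nf
    _ ≤ exp (-(c * min (t * log t / 2 * y) (log (1 / b) * √t))) := by
      gcongr
      exact min_le_mul_log_one_div hb ht hy hyb
    _ = exp (-c * min (t * log t / 2 * y) (log (1 / b) * √t)) := by rw [neg_mul]
    _ ≤ exp (-c * (t * log t / 2 * y)) + exp (-c * (log (1 / b) * √t)) :=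
      exp_neg_mul_min_le_add _ _ _
    _ = exp (-(c / 2 * (t * log t)) * y) + exp (-(c * log (1 / b)) * √t) := by ring_nf

lemma rpow_le_mul_exp {p κ x : ℝ} (hp : 0 < p) (hκ : 0 < κ) (hx : 0 ≤ x) :
    x ^ p ≤ (p / κ) ^ p * exp (κ * x) := by
  have hlinear : x ≤ p / κ * exp (κ * x / p) := calc
    x = p / κ * (κ * x / p) := by field_simp
    _ ≤ p / κ * exp (κ * x / p) := by
      gcongr
      linarith [add_one_le_exp (κ * x / p)]
  calc
    x ^ p ≤ (p / κ * exp (κ * x / p)) ^ p := rpow_le_rpow hx hlinear hp.le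
    _ = (p / κ) ^ p * exp (κ * x) := by
      rw [mul_rpow (by positivity) (exp_nonneg _), ← exp_mul, div_mul_cancel₀ _ hp.ne']

lemma exp_neg_mul_sqrt_le {p κ t : ℝ} (hp : 0 < p) (hκ : 0 < κ) (ht : 1 < t) :
    exp (-κ * √t) ≤ (4 * p / κ) ^ (4 * p) * (t * log t) ^ (-p) := by
  have hlog : 0 < log t := log_pos ht
  have hM : 0 < t * log t := by positivity
  have hsqrt : t * log t ≤ √t ^ 4 := calc
    t * log t ≤ t * t := by gcongr; exact log_le_self (by positivity)
    _ = (√t ^ 2) ^ 2 := by rw [sq_sqrt (by positivity), sq]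
    _ = √t ^ 4 := by rw [← pow_mul]
  have hpow : (t * log t) ^ p ≤ (4 * p / κ) ^ (4 * p) * exp (κ * √t) := calc
    (t * log t) ^ p ≤ (√t ^ 4) ^ p := rpow_le_rpow hM.le hsqrt hp.le
    _ = √t ^ (4 * p) := by rw [rpow_mul (sqrt_nonneg t), ← rpow_ofNat]
    _ ≤ (4 * p / κ) ^ (4 * p) * exp (κ * √t) :=
      rpow_le_mul_exp (by positivity) hκ (sqrt_nonneg t)
  rwa [neg_mul, exp_neg, rpow_neg hM.le, ← div_eq_mul_inv, le_div_iff₀ (rpow_pos_of_pos hM p),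
    inv_mul_le_iff₀ (exp_pos _), mul_comm (exp _)]

lemma integral_rpow_mul_exp_neg_mul_le {α b r : ℝ} (hα : -1 < α) (hb : 0 ≤ b) (hr : 0 < r) :
    ∫ y in (0 : ℝ)..b, y ^ α * exp (-r * y) ≤ Gamma (α + 1) * r ^ (-(α + 1)) := by
  have hint : IntegrableOn (fun y : ℝ ↦ y ^ α * exp (-r * y)) (Set.Ioi 0) := by
    simpa only [rpow_one] using integrableOn_rpow_mul_exp_neg_mul_rpow hα one_pos hr
  have hnonneg : ∀ᵐ y ∂volume.restrict (Set.Ioi 0), 0 ≤ y ^ α * exp (-r * y) :=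
    (ae_restrict_mem measurableSet_Ioi).mono fun y hy ↦
      mul_nonneg (rpow_nonneg (le_of_lt hy) α) (exp_nonneg _)
  calc
    ∫ y in (0 : ℝ)..b, y ^ α * exp (-r * y) = ∫ y in Set.Ioc 0 b, y ^ α * exp (-r * y) :=
      integral_of_le hb
    _ ≤ ∫ y in Set.Ioi 0, y ^ α * exp (-r * y) :=
      setIntegral_mono_set hint hnonneg Set.Ioc_subset_Ioi_self.eventuallyLE
    _ = Gamma (α + 1) * r ^ (-(α + 1)) := by
      have hGamma := integral_rpow_mul_exp_neg_mul_Ioi (by linarith : 0 < α + 1) hr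
      rw [add_sub_cancel_right, one_div, inv_rpow hr.le, ← rpow_neg hr.le, mul_comm] at hGamma
      simpa only [neg_mul] using hGamma

lemma intervalIntegrable_rpow_mul_exp_mul_log_one_div {α : ℝ} (hα : -1 < α) (a b r : ℝ) :
    IntervalIntegrable (fun y : ℝ ↦ y ^ α * exp (r * y * log (1 / y))) volume a b := by
  have hcont : Continuous fun y : ℝ ↦ r * y * log (1 / y) := by
    simpa only [one_div, log_inv, mul_neg, neg_mul, mul_assoc] using
      continuous_mul_log.const_mul (-r)
  exact (intervalIntegrable_rpow' hα).mul_continuousOn hcont.rexp.continuousOn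

lemma integral_rpow_mul_exp_neg_mul_log_one_div_le {α b c t : ℝ} (hα : -1 < α) (hb₀ : 0 ≤ b)
    (hb₁ : b ≤ 1) (hc : 0 < c) (ht : 1 < t) :
    ∫ y in (0 : ℝ)..b, y ^ α * exp (-c * t * y * log (1 / y)) ≤
      Gamma (α + 1) * (c / 2 * (t * log t)) ^ (-(α + 1)) +
        b ^ (α + 1) / (α + 1) * exp (-(c * log (1 / b)) * √t) := by
  have hr : 0 < c / 2 * (t * log t) := by have := log_pos ht; positivity
  set r := c / 2 * (t * log t)
  set E := exp (-(c * log (1 / b)) * √t)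
  have hint_gamma : IntervalIntegrable (fun y : ℝ ↦ y ^ α * exp (-r * y)) volume 0 b :=
    (intervalIntegrable_rpow' hα).mul_continuousOn (by fun_prop)
  have hint_const : IntervalIntegrable (fun y : ℝ ↦ y ^ α * E) volume 0 b :=
    (intervalIntegrable_rpow' hα).mul_const E
  calc
    ∫ y in (0 : ℝ)..b, y ^ α * exp (-c * t * y * log (1 / y)) ≤
        ∫ y in (0 : ℝ)..b, (y ^ α * exp (-r * y) + y ^ α * E) := by
      refine integral_mono_on_of_le_Ioo hb₀
        (intervalIntegrable_rpow_mul_exp_mul_log_one_div hα 0 b (-c * t))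
        (hint_gamma.add hint_const) fun y hy ↦ ?_
      rw [← mul_add]
      exact mul_le_mul_of_nonneg_left
        (exp_neg_mul_log_one_div_le hb₁ hc.le (by positivity) hy.1 hy.2.le)
        (rpow_nonneg hy.1.le α)
    _ = (∫ y in (0 : ℝ)..b, y ^ α * exp (-r * y)) + (∫ y in (0 : ℝ)..b, y ^ α) * E := by
      rw [intervalIntegral.integral_add hint_gamma hint_const, intervalIntegral.integral_mul_const]
    _ ≤ Gamma (α + 1) * r ^ (-(α + 1)) + b ^ (α + 1) / (α + 1) * E := by
      rw [integral_rpow (Or.inl hα), zero_rpow (by linarith), sub_zero]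
      gcongr
      exact integral_rpow_mul_exp_neg_mul_le hα hb₀ hr

theorem integral_estimate_general {α b c : ℝ} (hα : -1 < α) (hb₀ : 0 < b) (hb₁ : b < 1)
    (hc : 0 < c) :
    ∃ C > 0, ∀ t : ℝ, 1 < t →
      ∫ y in (0 : ℝ)..b, y ^ α * exp (-c * t * y * log (1 / y)) ≤
        C * (t * log t) ^ (-α - 1) := by
  have hp : 0 < α + 1 := by linarith
  have hκ : 0 < c * log (1 / b) := mul_pos hc (log_pos (one_lt_one_div hb₀ hb₁))
  set κ := c * log (1 / b)
  refine ⟨Gamma (α + 1) * (c / 2) ^ (-(α + 1)) +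
    b ^ (α + 1) / (α + 1) * (4 * (α + 1) / κ) ^ (4 * (α + 1)), by positivity, fun t ht ↦ ?_⟩
  have hM : 0 ≤ t * log t := by have := log_pos ht; positivity
  calc
    ∫ y in (0 : ℝ)..b, y ^ α * exp (-c * t * y * log (1 / y)) ≤
        Gamma (α + 1) * (c / 2 * (t * log t)) ^ (-(α + 1)) +
          b ^ (α + 1) / (α + 1) * exp (-κ * √t) :=
      integral_rpow_mul_exp_neg_mul_log_one_div_le hα hb₀.le hb₁.le hc ht
    _ ≤ Gamma (α + 1) * (c / 2 * (t * log t)) ^ (-(α + 1)) +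
          b ^ (α + 1) / (α + 1) *
            ((4 * (α + 1) / κ) ^ (4 * (α + 1)) * (t * log t) ^ (-(α + 1))) := by
      gcongr
      exact exp_neg_mul_sqrt_le hp hκ ht
    _ = _ := by
      rw [mul_rpow (by positivity) hM, ← neg_add']
      ring

/-- **Lemma (technical integral estimate).**
For every real `α > -1` there exist `C > 0` and `n₀` such that for all integers `n ≥ n₀`:
`∫_0^{1/e} y^α e^{-4ny log(1/y)} dy ≤ C (n log n)^{-α-1}`. -/
theorem integral_estimate (α : ℝ) (hα : -1 < α) :
    ∃ C > (0 : ℝ), ∃ n₀ : ℕ, ∀ n : ℕ, n₀ ≤ n →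
      (∫ y in (0 : ℝ)..(1 / Real.exp 1),
          y ^ α * Real.exp (-4 * n * y * Real.log (1 / y))) ≤
        C * ((n : ℝ) * Real.log n) ^ (-α - 1) := by
  have he : 1 / exp 1 < 1 := (div_lt_one (exp_pos 1)).2 (one_lt_exp_iff.2 one_pos)
  obtain ⟨C, hC, hbound⟩ := integral_estimate_general hα (by positivity) he four_pos
  exact ⟨C, hC, 2, fun n hn ↦ hbound n (Nat.one_lt_cast.2 hn)⟩
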